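/- The dual infimum is achieved: there exists ζ̂ ∈ ℝ^r with ζ̂_1 + ⋯ + ζ̂_r = 0 such that λ_max(a + ζ̂_1 I_1 + ⋯ + ζ̂_r I_r) = inf{λ_max(a + ζ_1 I_1 + ⋯ + ζ_r I_r) : ζ ∈ ℝ^r, ζ_1 + ⋯ + ζ_r = 0}. -/

import Mathlib

open scoped ComplexInnerProductSpace ComplexOrder

noncomputable section

/-- The Hilbert space `ℓ²(V; ℂ)`. -/
abbrev Hs (V : Type) : Type := lp (fun _ : V => ℂ) 2

/-- The standard orthonormal basis vector `e_v` of `ℓ²(V; ℂ)`. -/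
def bas (V : Type) (v : V) : Hs V :=
  letI := Classical.decEq V
  lp.single 2 v 1

/-- `d_j(ρ) = ∑_{v ∈ V_j} Re ⟪e_v, ρ e_v⟫` (only finitely many nonzero terms for
finitely-supported `ρ`). -/
def dPart {V : Type} {r : ℕ} (g : V → Fin r) (ρ : Hs V →L[ℂ] Hs V) (j : Fin r) : ℝ :=
  ∑' v : V, if g v = j then (⟪bas V v, ρ (bas V v)⟫).re else 0

/-- `T(ρ, b) = ∑_{v ∈ V} Re ⟪e_v, ρ (b e_v)⟫`, the trace of `ρ b`. -/
def TT {V : Type} (ρ b : Hs V →L[ℂ] Hs V) : ℝ :=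
  ∑' v : V, (⟪bas V v, ρ (b (bas V v))⟫).re

/-- `λ_max(b) = sup { Re ⟪x, b x⟫ : ‖x‖ = 1 }`. -/
def lamMax {V : Type} (b : Hs V →L[ℂ] Hs V) : ℝ :=
  sSup {t : ℝ | ∃ x : Hs V, ‖x‖ = 1 ∧ t = (⟪x, b x⟫).re}

/-!
The function `F ζ = λ_max(a + ∑ ζ_j I_j)` is continuous, because `λ_max` is `1`-Lipschitz for the
operator norm (`lipschitzWith_lamMax`), and it is coercive on the hyperplane `∑ ζ_j = 0`: testing
with a basis vector `e_v`, `v ∈ V_j`, gives `ζ_j ≤ F ζ + ‖a‖` for every `j` (`coord_le_lamMax`),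
and an upper bound on all coordinates of a vector with zero sum also bounds them from below.
Hence the sublevel set `{F ≤ F 0}` of the hyperplane lies in a compact set, on which `F` attains
its minimum.
-/

lemma norm_bas (V : Type) (v : V) : ‖bas V v‖ = 1 := by
  classical
  unfold bas
  rw [lp.norm_single (by norm_num)]
  simp

lemma abs_re_inner_apply_le {V : Type} (b : Hs V →L[ℂ] Hs V) {x : Hs V} (hx : ‖x‖ = 1) :
    |(⟪x, b x⟫).re| ≤ ‖b‖ := by
  calc |(⟪x, b x⟫).re| ≤ ‖⟪x, b x⟫‖ := Complex.abs_re_le_norm _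
    _ ≤ ‖x‖ * ‖b x‖ := norm_inner_le_norm _ _
    _ ≤ ‖b‖ := by simpa [hx] using b.le_opNorm x

lemma le_lamMax {V : Type} (b : Hs V →L[ℂ] Hs V) {x : Hs V} (hx : ‖x‖ = 1) :
    (⟪x, b x⟫).re ≤ lamMax b := by
  refine le_csSup ⟨‖b‖, ?_⟩ ⟨x, hx, rfl⟩
  rintro t ⟨y, hy, rfl⟩
  exact (abs_le.1 (abs_re_inner_apply_le b hy)).2

lemma lipschitzWith_lamMax (V : Type) [Nonempty V] :
    LipschitzWith 1 (lamMax : (Hs V →L[ℂ] Hs V) → ℝ) := by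
  refine LipschitzWith.of_le_add fun b c => ?_
  obtain ⟨v⟩ := ‹Nonempty V›
  refine csSup_le ⟨_, bas V v, norm_bas V v, rfl⟩ ?_
  rintro t ⟨x, hx, rfl⟩
  have h1 := le_lamMax c hx
  have h2 := (abs_le.1 (abs_re_inner_apply_le (b - c) hx)).2
  rw [sub_apply, inner_sub_right, Complex.sub_re] at h2
  rw [dist_eq_norm]
  linarith

/-- Coercivity: a unit vector `e_v` with `v ∈ V_j` has `⟪e_v, (∑ ζ_i I_i) e_v⟫ = ζ_j`, so
every `ζ_j` is controlled by `λ_max`. -/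
lemma coord_le_lamMax {r : ℕ} {V : Type} (g : V → Fin r) (hg : ∀ j : Fin r, ∃ v : V, g v = j)
    (a : Hs V →L[ℂ] Hs V) (I : Fin r → (Hs V →L[ℂ] Hs V))
    (hI : ∀ (j : Fin r) (v : V), I j (bas V v) = if g v = j then bas V v else 0)
    (ζ : Fin r → ℝ) (j : Fin r) :
    ζ j ≤ lamMax (a + ∑ j : Fin r, (ζ j : ℂ) • I j) + ‖a‖ := by
  obtain ⟨v, rfl⟩ := hg j
  have h1 := le_lamMax (a + ∑ j : Fin r, (ζ j : ℂ) • I j) (norm_bas V v)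
  have h2 := (abs_le.1 (abs_re_inner_apply_le a (norm_bas V v))).1
  have h3 : (∑ j : Fin r, (ζ j : ℂ) • I j) (bas V v) = (ζ (g v) : ℂ) • bas V v := by
    simp only [sum_apply, FunLike.coe_smul, Pi.smul_apply, hI, smul_ite, smul_zero,
      Finset.sum_ite_eq, Finset.mem_univ, if_true]
  rw [add_apply, h3, inner_add_right, inner_smul_right,
    inner_self_eq_norm_sq_to_K, norm_bas, Complex.add_re] at h1
  simp only [Complex.coe_algebraMap, Complex.ofReal_one, one_pow, mul_one,
    Complex.ofReal_re] at h1
  linarith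

/-- The dual infimum is achieved by some `ζ̂` with `∑ ζ̂ = 0`. -/
theorem stmt8 (r : ℕ) (hr : 1 ≤ r) (V : Type) [Countable V] [Nonempty V]
    (g : V → Fin r) (hg : ∀ j : Fin r, ∃ v : V, g v = j)
    (a : Hs V →L[ℂ] Hs V) (ha : IsSelfAdjoint a)
    (I : Fin r → (Hs V →L[ℂ] Hs V))
    (hI : ∀ (j : Fin r) (v : V), I j (bas V v) = if g v = j then bas V v else 0) :
    ∃ ζhat : Fin r → ℝ, (∑ j : Fin r, ζhat j = 0) ∧
      lamMax (a + ∑ j : Fin r, (ζhat j : ℂ) • I j)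
        = sInf {t : ℝ | ∃ ζ : Fin r → ℝ, (∑ j : Fin r, ζ j = 0) ∧
            t = lamMax (a + ∑ j : Fin r, (ζ j : ℂ) • I j)} := by
  set F : (Fin r → ℝ) → ℝ := fun ζ => lamMax (a + ∑ j : Fin r, (ζ j : ℂ) • I j)
  have hcont : Continuous F := (lipschitzWith_lamMax V).continuous.comp (by fun_prop)
  have hcoer : ∀ ζ j, ζ j ≤ F ζ + ‖a‖ := coord_le_lamMax g hg a I hI
  set M : ℝ := F 0 + ‖a‖
  have hM0 : 0 ≤ M := hcoer 0 ⟨0, hr⟩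
  have hr1 : (1 : ℝ) ≤ r := by exact_mod_cast hr
  let K : Set (Fin r → ℝ) :=
    (Set.univ.pi fun _ => Set.Icc (M - r * M) M) ∩ {ζ | ∑ j, ζ j = 0}
  have hK : IsCompact K := (isCompact_univ_pi fun _ => isCompact_Icc).inter_right
    (isClosed_eq (by fun_prop) continuous_const)
  have h0 : (0 : Fin r → ℝ) ∈ K :=
    ⟨fun _ _ => ⟨by simp only [Pi.zero_apply]; nlinarith, hM0⟩, by simp⟩
  obtain ⟨z, hzK, hz⟩ := hK.exists_isMinOn (Set.nonempty_of_mem h0) hcont.continuousOn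
  refine ⟨z, hzK.2, Eq.symm (IsLeast.csInf_eq (And.intro ⟨z, hzK.2, rfl⟩ ?_))⟩
  rintro t ⟨ζ, hζ, rfl⟩
  change F z ≤ F ζ
  rcases le_total (F ζ) (F 0) with h | h
  · have hup : ∀ j, ζ j ≤ M := fun j => (hcoer ζ j).trans (by linarith)
    suffices hζK : ζ ∈ K from hz hζK
    refine ⟨fun j _ => ⟨?_, hup j⟩, hζ⟩
    -- The nonnegative numbers `M - ζ_i` sum to `r M`, so each of them is at most `r M`.
    have hs := Finset.single_le_sum (f := fun i => M - ζ i)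
      (fun i _ => sub_nonneg.2 (hup i)) (Finset.mem_univ j)
    simp only [Finset.sum_sub_distrib, hζ, Finset.sum_const, Finset.card_univ, Fintype.card_fin,
      nsmul_eq_mul, sub_zero] at hs
    linarith
  · exact (hz h0).trans h
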